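/- The set of small roots of a Coxeter system of finite rank is finite. -/

import Mathlib

open scoped Classical

/-- A geometric representation (with based root system) of a Coxeter system `cs`
on a real vector space `V`, preserving a symmetric bilinear form `form`, with
simple roots `root i` satisfying the standard inner products
`B(α_i, α_j) = -cos (π / m i j)` (with value `≤ -1` when `m i j = ∞`, encoded `0`). -/
structure GeomRep {B : Type*} {W : Type*} [Group W] (M : CoxeterMatrix B)
    (cs : CoxeterSystem M W) (V : Type*) [AddCommGroup V] [Module ℝ V] where
  form : LinearMap.BilinForm ℝ V
  form_symm : ∀ u v : V, form u v = form v u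
  ρ : W →* (V ≃ₗ[ℝ] V)
  ρ_faithful : Function.Injective ρ
  root : B → V
  root_indep : LinearIndependent ℝ root
  form_preserved : ∀ (w : W) (u v : V), form (ρ w u) (ρ w v) = form u v
  form_root_finite : ∀ i j : B, M i j ≠ 0 →
    form (root i) (root j) = - Real.cos (Real.pi / (M i j : ℝ))
  form_root_infinite : ∀ i j : B, M i j = 0 → form (root i) (root j) ≤ -1
  simple_act : ∀ (i : B) (v : V),
    ρ (cs.simple i) v = v - (2 * form (root i) v) • root i

namespace GeomRep

variable {B : Type*} {W : Type*} [Group W] {M : CoxeterMatrix B}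
  {cs : CoxeterSystem M W} {V : Type*} [AddCommGroup V] [Module ℝ V]
  (G : GeomRep M cs V)

/-- The root system `Φ = W · Δ`. -/
def Roots : Set V := {v | ∃ (w : W) (i : B), v = G.ρ w (G.root i)}

/-- `v` is a nonnegative linear combination of simple roots. -/
def IsNonnegComb (v : V) : Prop :=
  ∃ c : B →₀ ℝ, (∀ i, 0 ≤ c i) ∧ v = c.sum fun i a => a • G.root i

/-- The set of positive roots `Φ⁺`. -/
def PosRoots : Set V := {v ∈ G.Roots | G.IsNonnegComb v}

/-- The set of negative roots `Φ⁻ = -Φ⁺`. -/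
def NegRoots : Set V := {v ∈ G.Roots | G.IsNonnegComb (-v)}

/-- The reflection in a root `α`, as a linear endomorphism of `V`. -/
def refl (α : V) : Module.End ℝ V :=
  LinearMap.id - (2 : ℝ) • LinearMap.smulRight (G.form α) α

/-- The (left) inversion set `N(w) = Φ⁺ ∩ w(Φ⁻)`. -/
def invSet (w : W) : Set V := {β ∈ G.PosRoots | G.ρ w⁻¹ β ∈ G.NegRoots}

/-- `β` dominates `α` : every `w` sending `β` negative sends `α` negative. -/
def Dominates (β α : V) : Prop := ∀ w : W, G.ρ w β ∈ G.NegRoots → G.ρ w α ∈ G.NegRoots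

/-- A small root: a positive root dominating no positive root other than itself. -/
def IsSmall (β : V) : Prop :=
  β ∈ G.PosRoots ∧ ∀ α ∈ G.PosRoots, G.Dominates β α → α = β

/-- The conical (nonnegative) hull of a set. -/
def cone (X : Set V) : Set V :=
  {v | ∃ c : V →₀ ℝ, (∀ x, 0 ≤ c x) ∧ ↑c.support ⊆ X ∧ v = c.sum fun x a => a • x}

/-- Low element: its inversion set is the biconvex closure of its small inversions. -/
def IsLow (Sm : Set V) (w : W) : Prop :=
  G.invSet w = cone (G.invSet w ∩ Sm) ∩ G.PosRoots

/-- The closed fundamental chamber. -/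
def chamber : Set V := {v | ∀ i : B, 0 ≤ G.form v (G.root i)}

/-- The Tits cone `T = ⋃_{w ∈ W} w(C̄)`. -/
def titsCone : Set V := ⋃ w : W, ⇑(G.ρ w) '' G.chamber

end GeomRep



namespace GeomRep

variable {B : Type*} {W : Type*} [Group W] {M : CoxeterMatrix B}
  {cs : CoxeterSystem M W} {V : Type*} [AddCommGroup V] [Module ℝ V]
  (G : GeomRep M cs V)

/-! ### The cone of nonnegative combinations -/

theorem nn_add {u v : V} (hu : G.IsNonnegComb u) (hv : G.IsNonnegComb v) :
    G.IsNonnegComb (u + v) := by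
  obtain ⟨c, hc, rfl⟩ := hu
  obtain ⟨d, hd, rfl⟩ := hv
  refine ⟨c + d, fun i => add_nonneg (hc i) (hd i), ?_⟩
  rw [Finsupp.sum_add_index'] <;> simp [add_smul]

theorem nn_smul {u : V} {a : ℝ} (ha : 0 ≤ a) (hu : G.IsNonnegComb u) :
    G.IsNonnegComb (a • u) := by
  obtain ⟨c, hc, rfl⟩ := hu
  refine ⟨a • c, fun i => mul_nonneg ha (hc i), ?_⟩
  rw [Finsupp.sum_smul_index' (by simp), Finsupp.smul_sum]
  simp [mul_smul]

theorem nn_root (i : B) : G.IsNonnegComb (G.root i) := by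
  refine ⟨Finsupp.single i 1, fun j => ?_, by simp⟩
  rw [Finsupp.single_apply]; split_ifs <;> norm_num

theorem exists_functional (g : B → ℝ) : ∃ f : V →ₗ[ℝ] ℝ, ∀ i, f (G.root i) = g i := by
  let b := Module.Basis.span G.root_indep
  obtain ⟨f, hf⟩ := LinearMap.exists_extend (b.constr ℝ g : _ →ₗ[ℝ] ℝ)
  refine ⟨f, fun i => ?_⟩
  have h1 : ((b i : Submodule.span ℝ (Set.range G.root)) : V) = G.root i :=
    congrArg Subtype.val (Module.Basis.span_apply G.root_indep i)
  have h2 := LinearMap.congr_fun hf (b i)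
  simp only [LinearMap.comp_apply, Submodule.subtype_apply, Module.Basis.constr_basis] at h2
  rw [← h1]; exact h2

theorem functional_nonneg {f : V →ₗ[ℝ] ℝ} (hf : ∀ i, 0 ≤ f (G.root i)) {v : V}
    (hv : G.IsNonnegComb v) : 0 ≤ f v := by
  obtain ⟨c, hc, rfl⟩ := hv
  rw [Finsupp.sum, map_sum]
  exact Finset.sum_nonneg fun i _ => by simpa using mul_nonneg (hc i) (hf i)

/-- The height functional. -/
noncomputable def ht : V →ₗ[ℝ] ℝ := (G.exists_functional (fun _ => 1)).choose

theorem ht_root (i : B) : G.ht (G.root i) = 1 := (G.exists_functional (fun _ => 1)).choose_spec i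

/-- Coordinate functionals. -/
noncomputable def coef (i : B) : V →ₗ[ℝ] ℝ :=
  (G.exists_functional (fun j => if j = i then 1 else 0)).choose

theorem coef_root (i j : B) : G.coef i (G.root j) = if j = i then 1 else 0 :=
  (G.exists_functional (fun j => if j = i then 1 else 0)).choose_spec j

theorem ht_nonneg {v : V} (hv : G.IsNonnegComb v) : 0 ≤ G.ht v :=
  G.functional_nonneg (fun i => by rw [ht_root]; norm_num) hv

theorem coef_nonneg (i : B) {v : V} (hv : G.IsNonnegComb v) : 0 ≤ G.coef i v :=
  G.functional_nonneg (fun j => by rw [coef_root]; split_ifs <;> norm_num) hv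

theorem eq_zero_of_ht {v : V} (hv : G.IsNonnegComb v) (h : G.ht v ≤ 0) : v = 0 := by
  obtain ⟨c, hc, rfl⟩ := hv
  rw [Finsupp.sum, map_sum] at h
  simp only [map_smul, ht_root, smul_eq_mul, mul_one] at h
  rw [Finsupp.sum]
  have h0 := (Finset.sum_eq_zero_iff_of_nonneg (fun i _ => hc i)).1
    (le_antisymm h (Finset.sum_nonneg fun i _ => hc i))
  exact Finset.sum_eq_zero fun i hi => by rw [h0 i hi, zero_smul]

theorem eq_zero_of_nn {v : V} (hv : G.IsNonnegComb v) (h : G.IsNonnegComb (-v)) : v = 0 :=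
  G.eq_zero_of_ht hv (by have := G.ht_nonneg h; rw [map_neg] at this; linarith)

/-! ### Basic facts -/

theorem form_self (i : B) : G.form (G.root i) (G.root i) = 1 := by
  rw [G.form_root_finite i i (by simp)]; simp

theorem simple_root (i : B) : G.ρ (cs.simple i) (G.root i) = -G.root i := by
  rw [G.simple_act, form_self, mul_one, two_smul]; abel

theorem rho_mul (u v : W) (x : V) : G.ρ (u * v) x = G.ρ u (G.ρ v x) := by
  rw [map_mul]; rfl

theorem rho_one (x : V) : G.ρ 1 x = x := by rw [map_one]; rfl

theorem simple_simple (i : B) (x : V) : G.ρ (cs.simple i) (G.ρ (cs.simple i) x) = x := by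
  rw [← rho_mul, cs.simple_mul_simple_self, rho_one]

/-- Chebyshev-like sequence. -/
noncomputable def cheb (c : ℝ) : ℕ → ℝ
  | 0 => 0
  | 1 => 1
  | (n + 2) => 2 * c * cheb c (n + 1) - cheb c n

theorem rec_mono {c : ℝ} (hc : 1 ≤ c) (x : ℕ → ℝ) (hx : ∀ n, x (n + 2) = 2 * c * x (n + 1) - x n)
    (h1 : 0 ≤ x 1) (h0 : x 0 ≤ x 1) (n : ℕ) :
    0 ≤ x (n + 1) ∧ x 1 - x 0 ≤ x (n + 1) - x n := by
  induction n with
  | zero => exact ⟨h1, le_refl _⟩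
  | succ n ih =>
    obtain ⟨a, b⟩ := ih
    have : x (n + 1) - x n ≤ x (n + 2) - x (n + 1) := by rw [hx]; nlinarith
    exact ⟨by change 0 ≤ x (n + 2); linarith, by change _ ≤ x (n + 2) - x (n + 1); linarith⟩

theorem cheb_nonneg_inf {c : ℝ} (hc : 1 ≤ c) (n : ℕ) : 0 ≤ cheb c n := by
  cases n with
  | zero => exact le_refl _
  | succ n => exact (rec_mono hc (cheb c) (fun n => rfl) (by simp [cheb]) (by simp [cheb]) n).1

theorem cheb_sin (θ : ℝ) (n : ℕ) : cheb (Real.cos θ) n * Real.sin θ = Real.sin (n * θ) ∧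
    cheb (Real.cos θ) (n + 1) * Real.sin θ = Real.sin ((n + 1 : ℕ) * θ) := by
  induction n with
  | zero => simp [cheb]
  | succ n ih =>
    refine ⟨ih.2, ?_⟩
    rw [cheb, sub_mul, mul_assoc, ih.1, ih.2]
    have e1 : ((n + 1 + 1 : ℕ) : ℝ) * θ = ((n + 1 : ℕ) : ℝ) * θ + θ := by push_cast; ring
    have e2 : (n : ℝ) * θ = ((n + 1 : ℕ) : ℝ) * θ - θ := by push_cast; ring
    rw [e1, e2, Real.sin_add, Real.sin_sub]; ring

theorem cheb_nonneg_fin {m : ℕ} (hm : 2 ≤ m) {n : ℕ} (hn : n ≤ m) :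
    0 ≤ cheb (Real.cos (Real.pi / m)) n := by
  have hm' : (2 : ℝ) ≤ m := by exact_mod_cast hm
  have hs : 0 < Real.sin (Real.pi / m) := by
    apply Real.sin_pos_of_pos_of_lt_pi
    · positivity
    · rw [div_lt_iff₀ (by linarith)]; nlinarith [Real.pi_pos]
  have h := (cheb_sin (Real.pi / m) n).1
  have : 0 ≤ Real.sin (n * (Real.pi / m)) := by
    apply Real.sin_nonneg_of_nonneg_of_le_pi
    · positivity
    · rw [mul_div_assoc', div_le_iff₀ (by linarith)]
      have : (n : ℝ) ≤ m := by exact_mod_cast hn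
      nlinarith [Real.pi_pos]
  rw [← h] at this
  exact nonneg_of_mul_nonneg_left this hs

theorem cheb_form_nonneg {s t : B} (hst : s ≠ t) {n : ℕ} (hn : M s t = 0 ∨ n ≤ M s t) :
    0 ≤ cheb (-G.form (G.root s) (G.root t)) n := by
  by_cases h0 : M s t = 0
  · apply cheb_nonneg_inf; have := G.form_root_infinite s t h0; linarith
  · rw [G.form_root_finite s t h0, neg_neg]
    have h1 := M.off_diagonal s t hst
    exact cheb_nonneg_fin (by omega) (hn.resolve_left h0)

/-! ### Positivity of roots -/

theorem descent_aux {s t : B} (hst : s ≠ t) {w : W} (hws : cs.length w < cs.length (w * cs.simple s))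
    (IH : ∀ u : W, cs.length u < cs.length w → ∀ i, cs.length u < cs.length (u * cs.simple i) →
      G.IsNonnegComb (G.ρ u (G.root i))) (d : ℕ) :
    ∀ (u : W) (j : ℕ) (a b : B), cs.length u = d → 1 ≤ j → (M s t = 0 ∨ j < M s t) →
      ((a = s ∧ b = t) ∨ (a = t ∧ b = s)) →
      w = u * cs.wordProd (CoxeterSystem.alternatingWord s t j) →
      b = (if Even j then s else t) →
      cs.length u + j = cs.length w →
      cs.length u < cs.length (u * cs.simple b) →
      G.ρ w (G.root s) = cheb (-G.form (G.root s) (G.root t)) (j + 1) • G.ρ u (G.root b)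
        + cheb (-G.form (G.root s) (G.root t)) j • G.ρ u (G.root a) →
      G.IsNonnegComb (G.ρ w (G.root s)) := by
  induction d with
  | zero =>
    intro u j a b hu hj hjm hab hw hb hl hub hform
    have ha : cs.length u < cs.length (u * cs.simple a) := by
      have := cs.length_mul_simple_ne u a; omega
    rw [hform]
    exact G.nn_add (G.nn_smul (G.cheb_form_nonneg hst (by omega)) (IH u (by omega) b hub))
      (G.nn_smul (G.cheb_form_nonneg hst (by omega)) (IH u (by omega) a ha))
  | succ d ih =>
    intro u j a b hu hj hjm hab hw hb hl hub hform
    by_cases ha : cs.length u < cs.length (u * cs.simple a)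
    · rw [hform]
      exact G.nn_add (G.nn_smul (G.cheb_form_nonneg hst (by omega)) (IH u (by omega) b hub))
        (G.nn_smul (G.cheb_form_nonneg hst (by omega)) (IH u (by omega) a ha))
    · have hla := cs.length_mul_simple u a
      have hua : u * cs.simple a * cs.simple a = u := by simp
      have hw' : w = u * cs.simple a *
          cs.wordProd (CoxeterSystem.alternatingWord s t (j + 1)) := by
        have hal : (if Even j then t else s) = a := by
          rcases hab with ⟨h1, h2⟩ | ⟨h1, h2⟩ <;> split_ifs at hb ⊢ <;> simp_all
        rw [CoxeterSystem.alternatingWord_succ', hal, cs.wordProd_cons, ← mul_assoc, hua, hw]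
      refine ih (u * cs.simple a) (j + 1) b a (by omega) (by omega) ?_ (by tauto) hw' ?_ (by omega)
        (by rw [hua]; omega) ?_
      · by_contra hcon
        have hjM : M s t = j + 1 := by omega
        have e1 : w * cs.simple s = u * cs.simple a *
            cs.wordProd (CoxeterSystem.alternatingWord t s (j + 1 + 1)) := by
          rw [CoxeterSystem.alternatingWord_succ, cs.wordProd_concat, ← mul_assoc, ← hw']
        have hM' : M t s = j + 1 := by rw [M.symmetric]; exact hjM
        rw [cs.prod_alternatingWord_eq_prod_alternatingWord_sub t s _ (by omega)] at e1
        have h1 := cs.length_mul_le (u * cs.simple a)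
          (cs.wordProd (CoxeterSystem.alternatingWord s t (M t s * 2 - (j + 1 + 1))))
        have h2 := cs.length_wordProd_le
          (CoxeterSystem.alternatingWord s t (M t s * 2 - (j + 1 + 1)))
        rw [CoxeterSystem.length_alternatingWord] at h2
        rw [← e1] at h1
        omega
      · rcases hab with ⟨h1, h2⟩ | ⟨h1, h2⟩ <;> simp only [Nat.even_add_one] <;>
          split_ifs at hb ⊢ <;> simp_all
      · have hfa : G.form (G.root a) (G.root b) = G.form (G.root s) (G.root t) := by
          rcases hab with ⟨rfl, rfl⟩ | ⟨rfl, rfl⟩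
          · rfl
          · rw [G.form_symm]
        have e1 : ∀ x, G.ρ u x = G.ρ (u * cs.simple a) (G.ρ (cs.simple a) x) := fun x => by
          rw [← rho_mul, hua]
        rw [hform, e1, e1, simple_root, G.simple_act a (G.root b), hfa]
        generalize G.ρ (u * cs.simple a) = R
        simp only [map_neg, map_sub, map_smul, cheb]
        module

theorem pos_of_ascent (n : ℕ) : ∀ (w : W), cs.length w = n → ∀ i,
    cs.length w < cs.length (w * cs.simple i) → G.IsNonnegComb (G.ρ w (G.root i)) := by
  induction n using Nat.strong_induction_on with
  | _ n IH =>
    intro w hw s hs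
    by_cases h1 : w = 1
    · subst h1; rw [rho_one]; exact G.nn_root s
    obtain ⟨t, ht⟩ := cs.exists_rightDescent_of_ne_one h1
    unfold CoxeterSystem.IsRightDescent at ht
    have hst : s ≠ t := by rintro rfl; omega
    have hwt : w * cs.simple t * cs.simple t = w := by simp
    have hl := cs.length_mul_simple w t
    refine G.descent_aux hst hs (fun u hu i hi => IH _ (hw ▸ hu) u rfl i hi) _ (w * cs.simple t) 1 s t
      rfl le_rfl ?_ (by tauto) ?_ (by simp) (by omega) (by rw [hwt]; omega) ?_
    · have := M.off_diagonal s t hst; omega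
    · simp [CoxeterSystem.alternatingWord]
    · have e1 : ∀ x, G.ρ w x = G.ρ (w * cs.simple t) (G.ρ (cs.simple t) x) := fun x => by
        rw [← rho_mul, hwt]
      rw [e1, G.simple_act t (G.root s), G.form_symm]
      generalize G.ρ (w * cs.simple t) = R
      simp only [map_sub, map_smul, cheb]
      module

theorem pos_of_lt {w : W} {i : B} (h : cs.length w < cs.length (w * cs.simple i)) :
    G.IsNonnegComb (G.ρ w (G.root i)) := G.pos_of_ascent _ w rfl i h

theorem neg_of_lt {w : W} {i : B} (h : cs.length (w * cs.simple i) < cs.length w) :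
    G.IsNonnegComb (-G.ρ w (G.root i)) := by
  have := G.pos_of_lt (w := w * cs.simple i) (i := i) (by simpa using h)
  rwa [rho_mul, simple_root, map_neg] at this

theorem root_mem (i : B) : G.root i ∈ G.Roots := ⟨1, i, by rw [rho_one]⟩

theorem rho_mem {v : V} (w : W) (hv : v ∈ G.Roots) : G.ρ w v ∈ G.Roots := by
  obtain ⟨u, i, rfl⟩ := hv
  exact ⟨w * u, i, by rw [rho_mul]⟩

theorem neg_mem {v : V} (hv : v ∈ G.Roots) : -v ∈ G.Roots := by
  obtain ⟨u, i, rfl⟩ := hv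
  exact ⟨u * cs.simple i, i, by rw [rho_mul, simple_root, map_neg]⟩

theorem pos_or_neg {v : V} (hv : v ∈ G.Roots) : G.IsNonnegComb v ∨ G.IsNonnegComb (-v) := by
  obtain ⟨u, i, rfl⟩ := hv
  rcases lt_or_gt_of_ne (cs.length_mul_simple_ne u i) with h | h
  · exact Or.inr (G.neg_of_lt h)
  · exact Or.inl (G.pos_of_lt h)

theorem norm_root {v : V} (hv : v ∈ G.Roots) : G.form v v = 1 := by
  obtain ⟨u, i, rfl⟩ := hv
  rw [G.form_preserved, form_self]

theorem root_ne_zero {v : V} (hv : v ∈ G.Roots) : v ≠ 0 := by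
  rintro rfl; simpa using G.norm_root hv

theorem mem_neg_iff {v : V} (hv : v ∈ G.Roots) : v ∈ G.NegRoots ↔ ¬ G.IsNonnegComb v := by
  constructor
  · intro h h'; exact G.root_ne_zero hv (G.eq_zero_of_nn h' h.2)
  · intro h; exact ⟨hv, (G.pos_or_neg hv).resolve_left h⟩

theorem ht_pos {v : V} (hv : v ∈ G.PosRoots) : 0 < G.ht v := by
  by_contra h
  exact G.root_ne_zero hv.1 (G.eq_zero_of_ht hv.2 (not_lt.1 h))

theorem pos_of_ht {v : V} (hv : v ∈ G.Roots) (h : 0 < G.ht v) : G.IsNonnegComb v := by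
  rcases G.pos_or_neg hv with h' | h'
  · exact h'
  · have := G.ht_nonneg h'; rw [map_neg] at this; linarith

theorem eq_one_of_pos {w : W} (h : ∀ i, G.IsNonnegComb (G.ρ w (G.root i))) : w = 1 := by
  by_contra h1
  obtain ⟨t, ht⟩ := cs.exists_rightDescent_of_ne_one h1
  exact G.root_ne_zero (G.rho_mem w (G.root_mem t)) (G.eq_zero_of_nn (h t) (G.neg_of_lt ht))

theorem posroot (i : B) : G.root i ∈ G.PosRoots := ⟨G.root_mem i, G.nn_root i⟩

theorem simple_pos {v : V} (hv : v ∈ G.PosRoots) {i : B} (hne : v ≠ G.root i) :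
    G.ρ (cs.simple i) v ∈ G.PosRoots := by
  refine ⟨G.rho_mem _ hv.1, ?_⟩
  rcases G.pos_or_neg (G.rho_mem (cs.simple i) hv.1) with h | h
  · exact h
  exfalso
  obtain ⟨c, hc, hvc⟩ := hv.2
  have key : ∀ j, j ≠ i → c j = 0 := by
    intro j hj
    have h1 := G.coef_nonneg j h
    rw [G.simple_act, map_neg, map_sub, map_smul, coef_root, if_neg (Ne.symm hj), smul_zero,
      sub_zero, hvc, Finsupp.sum, map_sum] at h1
    simp only [map_smul, coef_root, smul_eq_mul, mul_ite, mul_one, mul_zero,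
      Finset.sum_ite_eq'] at h1
    by_cases hj' : j ∈ c.support
    · rw [if_pos hj'] at h1; have := hc j; linarith
    · simpa using hj'
  have hcs : c = Finsupp.single i (c i) := by
    ext j
    by_cases hj : j = i
    · subst hj; simp
    · rw [key j hj, Finsupp.single_apply, if_neg (Ne.symm hj)]
  rw [hcs, Finsupp.sum_single_index (by simp)] at hvc
  have hn := G.norm_root hv.1
  rw [hvc] at hn
  simp only [map_smul, LinearMap.smul_apply, form_self, smul_eq_mul, mul_one] at hn
  have : c i = 1 := by have := hc i; nlinarith
  rw [this, one_smul] at hvc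
  exact hne hvc

theorem inv_finite (w : W) : {v | v ∈ G.PosRoots ∧ G.ρ w v ∈ G.NegRoots}.Finite := by
  induction w using cs.simple_induction_right with
  | one =>
    convert Set.finite_empty
    ext v
    simp only [Set.mem_ofPred_eq, Set.mem_empty_iff_false, iff_false, not_and]
    intro h h'
    rw [rho_one] at h'
    exact (G.mem_neg_iff h.1).1 h' h.2
  | mul_simple_right w i ih =>
    refine ((ih.image (G.ρ (cs.simple i))).insert (G.root i)).subset ?_
    rintro v ⟨hv, hv'⟩
    by_cases hne : v = G.root i
    · exact Or.inl hne
    · right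
      refine ⟨G.ρ (cs.simple i) v, ⟨G.simple_pos hv hne, ?_⟩, G.simple_simple i v⟩
      rwa [← rho_mul]

/-- Reflection in a root. -/
theorem exists_refl {v : V} (hv : v ∈ G.Roots) :
    ∃ t : W, ∀ x, G.ρ t x = x - (2 * G.form v x) • v := by
  obtain ⟨u, i, rfl⟩ := hv
  refine ⟨u * cs.simple i * u⁻¹, fun x => ?_⟩
  have h1 : ∀ y, G.ρ u (G.ρ u⁻¹ y) = y := fun y => by rw [← rho_mul, mul_inv_cancel, rho_one]
  rw [rho_mul, rho_mul, G.simple_act, map_sub, map_smul, h1]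
  conv_rhs => rw [← h1 x, G.form_preserved, h1]

end GeomRep


namespace GeomRep

variable {B : Type*} {W : Type*} [Group W] {M : CoxeterMatrix B}
  {cs : CoxeterSystem M W} {V : Type*} [AddCommGroup V] [Module ℝ V]
  (G : GeomRep M cs V)

/-! ### Dominance -/

theorem infinite_inv {γ δ : V} (hγ : γ ∈ G.PosRoots) (hδ : δ ∈ G.PosRoots)
    (hf : G.form γ δ ≤ -1) (x : W) (h1 : G.IsNonnegComb (-G.ρ x γ))
    (h2 : G.IsNonnegComb (-G.ρ x δ)) : False := by
  set c := -G.form γ δ with hc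
  have hc1 : 1 ≤ c := by linarith
  have hfc : G.form γ δ = -c := by rw [hc, neg_neg]
  have hfc' : G.form δ γ = -c := by rw [G.form_symm, hfc]
  set v : ℕ → V := fun n => cheb c (n + 1) • δ + cheb c n • γ with hv
  have hrec : ∀ n, v (n + 2) = (2 * c) • v (n + 1) - v n := by
    intro n
    simp only [hv, cheb]
    module
  have h0 : v 0 = δ := by simp [hv, cheb]
  have h1' : v 1 = (2 * c) • δ + γ := by simp [hv, cheb]
  have key : ∀ n, v n ∈ G.Roots ∧ v (n + 1) ∈ G.Roots ∧ G.form (v (n + 1)) (v n) = c := by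
    intro n
    induction n with
    | zero =>
      refine ⟨by rw [h0]; exact hδ.1, ?_, ?_⟩
      · obtain ⟨t, ht⟩ := G.exists_refl hδ.1
        have := G.rho_mem t hγ.1
        rw [ht, hfc'] at this
        convert this using 1
        rw [zero_add, h1']; module
      · rw [zero_add, h0, h1']
        simp only [map_add, map_smul, LinearMap.add_apply, LinearMap.smul_apply, smul_eq_mul,
          G.norm_root hδ.1, hfc]
        ring
    | succ n ih =>
      obtain ⟨a, b, e⟩ := ih
      refine ⟨b, ?_, ?_⟩
      · obtain ⟨t, ht⟩ := G.exists_refl b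
        have := G.neg_mem (G.rho_mem t a)
        rw [ht, e] at this
        convert this using 1
        rw [hrec]; module
      · rw [hrec]
        simp only [map_sub, map_smul, LinearMap.sub_apply, LinearMap.smul_apply, smul_eq_mul,
          G.norm_root b, G.form_symm (v n), e]
        ring
  have hch : ∀ n, 0 ≤ cheb c n := cheb_nonneg_inf hc1
  have hpos : ∀ n, G.IsNonnegComb (v n) := fun n =>
    G.nn_add (G.nn_smul (hch _) hδ.2) (G.nn_smul (hch _) hγ.2)
  have hneg : ∀ n, G.IsNonnegComb (-G.ρ x (v n)) := fun n => by
    have := G.nn_add (G.nn_smul (hch (n + 1)) h2) (G.nn_smul (hch n) h1)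
    convert this using 1
    simp only [hv, map_add, map_smul]; module
  have hd := G.ht_pos hδ
  have hg := G.ht_pos hγ
  have hlt : G.ht (v 0) < G.ht (v 1) := by
    rw [h0, h1', map_add, map_smul, smul_eq_mul]; nlinarith
  have hmono : StrictMono (fun n => G.ht (v n)) := by
    apply strictMono_nat_of_lt_succ
    intro n
    have := (rec_mono hc1 (fun n => G.ht (v n))
      (fun n => by simp only [hrec, map_sub, map_smul, smul_eq_mul])
      (G.ht_nonneg (hpos 1)) hlt.le n).2
    linarith
  have hinj : Function.Injective v := fun a b h => hmono.injective (by simp only [h])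
  exact Set.infinite_of_injective_forall_mem hinj
    (fun n => (⟨⟨(key n).1, hpos n⟩, G.rho_mem x (key n).1, hneg n⟩ :
      v n ∈ {v | v ∈ G.PosRoots ∧ G.ρ x v ∈ G.NegRoots})) (G.inv_finite x)

theorem dominates_or {α β : V} (hα : α ∈ G.PosRoots) (hβ : β ∈ G.PosRoots)
    (h : 1 ≤ G.form α β) : G.Dominates α β ∨ G.Dominates β α := by
  by_contra hcon
  simp only [Dominates, not_or, not_forall] at hcon
  obtain ⟨⟨w, hw1, hw2⟩, ⟨w', hw1', hw2'⟩⟩ := hcon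
  rw [G.mem_neg_iff (G.rho_mem _ hβ.1), not_not] at hw2
  rw [G.mem_neg_iff (G.rho_mem _ hα.1), not_not] at hw2'
  have e : ∀ y, G.ρ (w' * w⁻¹) (G.ρ w y) = G.ρ w' y := fun y => by
    rw [← rho_mul, inv_mul_cancel_right]
  refine G.infinite_inv (γ := -G.ρ w α) (δ := G.ρ w β)
    ⟨G.neg_mem (G.rho_mem _ hα.1), hw1.2⟩ ⟨G.rho_mem _ hβ.1, hw2⟩ ?_ (w' * w⁻¹) ?_ ?_
  · rw [map_neg, LinearMap.neg_apply, G.form_preserved]; linarith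
  · rw [map_neg, neg_neg, e]; exact hw2'
  · rw [e]; exact hw1'.2

/-! ### Small roots -/

theorem small_eq_of_form {α β : V} (hα : G.IsSmall α) (hβ : G.IsSmall β)
    (h : 1 ≤ G.form α β) : α = β := by
  rcases G.dominates_or hα.1 hβ.1 h with h | h
  · exact (hα.2 _ hβ.1 h).symm
  · exact hβ.2 _ hα.1 h

theorem small_eq_simple {β : V} {i : B} (hβ : G.IsSmall β)
    (h : 1 ≤ G.form β (G.root i)) : β = G.root i := by
  rcases G.dominates_or hβ.1 (G.posroot i) h with h | h
  · exact (hβ.2 _ (G.posroot i) h).symm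
  · by_contra hne
    have h1 := h (cs.simple i) ⟨G.rho_mem _ (G.root_mem i), by
      rw [simple_root, neg_neg]; exact G.nn_root i⟩
    rw [G.mem_neg_iff (G.rho_mem _ hβ.1.1)] at h1
    exact h1 (G.simple_pos hβ.1 hne).2

theorem small_down {β : V} {i : B} (hβ : G.IsSmall β) (hne : β ≠ G.root i)
    (h : 0 < G.form (G.root i) β) : G.IsSmall (G.ρ (cs.simple i) β) := by
  have hp := G.simple_pos hβ.1 hne
  refine ⟨hp, fun γ hγ hd => ?_⟩
  by_cases hγi : γ = G.root i
  · exfalso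
    subst hγi
    obtain ⟨t, ht⟩ := G.exists_refl hp.1
    have h1 := hd t ⟨G.rho_mem _ hp.1, by
      rw [ht, G.norm_root hp.1]; convert hp.2 using 1; module⟩
    rw [G.mem_neg_iff (G.rho_mem _ (G.root_mem i)), ht] at h1
    apply h1
    have e : G.form (G.ρ (cs.simple i) β) (G.root i) = - G.form (G.root i) β := by
      rw [G.form_symm, ← G.form_preserved (cs.simple i), simple_simple, simple_root]
      simp
    rw [e]
    have := G.nn_add (G.nn_root i) (G.nn_smul (a := 2 * G.form (G.root i) β) (by linarith) hp.2)
    convert this using 1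
    module
  · have := hβ.2 (G.ρ (cs.simple i) γ) (G.simple_pos hγ hγi) (fun w hw => by
      rw [← rho_mul]
      apply hd
      rw [← rho_mul, cs.simple_mul_simple_cancel_right]; exact hw)
    rw [← this, simple_simple]

/-- An upward step using a simple reflection in `J`. -/
def Step (J : Set B) (β β' : V) : Prop :=
  G.IsSmall β ∧ G.IsSmall β' ∧ ∃ i ∈ J, G.form (G.root i) β < 0 ∧ β' = G.ρ (cs.simple i) β

theorem reach (n : ℕ) : ∀ (β : V) (w : W), G.IsSmall β → cs.length w = n →
    G.IsNonnegComb (-G.ρ w β) → ∃ i, G.IsSmall (G.root i) ∧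
      Relation.ReflTransGen (G.Step Set.univ) (G.root i) β := by
  induction n using Nat.strong_induction_on with
  | _ n IH =>
    intro β w hβ hw hneg
    by_cases hmin : ∃ u, cs.length u < n ∧ G.IsNonnegComb (-G.ρ u β)
    · obtain ⟨u, hu, hu'⟩ := hmin
      exact IH _ hu β u hβ rfl hu'
    have hmin' : ∀ u, cs.length u < n → G.IsNonnegComb (G.ρ u β) := fun u hu =>
      (G.pos_or_neg (G.rho_mem u hβ.1.1)).resolve_right fun h => hmin ⟨u, hu, h⟩
    have hw1 : w ≠ 1 := by
      rintro rfl
      rw [rho_one] at hneg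
      exact G.root_ne_zero hβ.1.1 (G.eq_zero_of_nn hβ.1.2 hneg)
    obtain ⟨s, hs⟩ := cs.exists_rightDescent_of_ne_one hw1
    unfold CoxeterSystem.IsRightDescent at hs
    have hww : w * cs.simple s * cs.simple s = w := by simp
    by_cases hbs : β = G.root s
    · exact ⟨s, hbs ▸ hβ, hbs ▸ Relation.ReflTransGen.refl⟩
    have hf : 0 < G.form (G.root s) β := by
      by_contra hle
      have h1 := hmin' (w * cs.simple s) (by omega)
      have h2 := G.pos_of_lt (w := w * cs.simple s) (i := s) (by rw [hww]; exact hs)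
      have h3 := G.nn_add h1 (G.nn_smul (a := 2 * -G.form (G.root s) β) (by linarith) h2)
      apply G.root_ne_zero (G.rho_mem w hβ.1.1)
      refine G.eq_zero_of_nn ?_ hneg
      convert h3 using 1
      conv_lhs => rw [← hww, rho_mul, G.simple_act]
      generalize G.ρ (w * cs.simple s) = R
      simp only [map_sub, map_smul]
      module
    have hsm := G.small_down hβ hbs hf
    obtain ⟨i, hi, hr⟩ := IH _ (hw ▸ hs) _ (w * cs.simple s) hsm rfl (by
      rw [← rho_mul, hww]; exact hneg)
    refine ⟨i, hi, hr.tail ⟨hsm, hβ, s, Set.mem_univ _, ?_, ?_⟩⟩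
    · rw [← G.form_preserved (cs.simple s), simple_simple, simple_root]; simpa using hf
    · rw [simple_simple]

theorem reach' {β : V} (hβ : G.IsSmall β) : ∃ i, G.IsSmall (G.root i) ∧
      Relation.ReflTransGen (G.Step Set.univ) (G.root i) β := by
  obtain ⟨u, i, hu⟩ := hβ.1.1
  refine G.reach _ β (cs.simple i * u⁻¹) hβ rfl ?_
  rw [hu, ← rho_mul, inv_mul_cancel_right, simple_root, neg_neg]
  exact G.nn_root i

theorem step_span {J : Set B} {β0 β : V} (h : Relation.ReflTransGen (G.Step J) β0 β) :
    β - β0 ∈ Submodule.span ℝ (G.root '' J) := by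
  induction h with
  | refl => simp
  | tail _ hs ih =>
    obtain ⟨_, _, i, hi, _, rfl⟩ := hs
    rw [G.simple_act, sub_right_comm]
    exact Submodule.sub_mem _ ih (Submodule.smul_mem _ _ (Submodule.subset_span ⟨i, hi, rfl⟩))

theorem step_small {J : Set B} {β0 β : V} (h0 : G.IsSmall β0)
    (h : Relation.ReflTransGen (G.Step J) β0 β) : G.IsSmall β := by
  induction h with
  | refl => exact h0
  | tail _ hs _ => exact hs.2.1

theorem form_root_le {i j : B} (h : i ≠ j) : G.form (G.root i) (G.root j) ≤ 0 := by
  by_cases h0 : M i j = 0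
  · have := G.form_root_infinite i j h0; linarith
  · rw [G.form_root_finite i j h0]
    have h1 := M.off_diagonal i j h
    have h2 : (2 : ℝ) ≤ M i j := by exact_mod_cast (by omega : 2 ≤ M i j)
    have : 0 ≤ Real.cos (Real.pi / M i j) := by
      apply Real.cos_nonneg_of_mem_Icc
      constructor
      · have : 0 ≤ Real.pi / M i j := by positivity
        linarith [Real.pi_pos]
      · rw [div_le_div_iff₀ (by linarith) (by norm_num)]; nlinarith [Real.pi_pos]
    linarith

theorem step_form_le {J : Set B} {s : B} {β β' : V} (h : G.Step (J \ {s}) β β')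
    (hb : G.form (G.root s) β ≤ -1) : G.form (G.root s) β' ≤ -1 := by
  obtain ⟨_, _, i, hi, hlt, rfl⟩ := h
  rw [G.simple_act, map_sub, map_smul, smul_eq_mul]
  have := G.form_root_le (i := s) (j := i) (fun h => hi.2 h.symm)
  nlinarith

theorem step_avoid {J : Set B} {s : B} {β β' : V} (h : G.Step J β β')
    (hb : G.form (G.root s) β ≤ -1) : G.Step (J \ {s}) β β' := by
  obtain ⟨h1, h2, i, hi, hlt, rfl⟩ := h
  refine ⟨h1, h2, i, ⟨hi, ?_⟩, hlt, rfl⟩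
  rintro rfl
  have e := G.small_eq_simple (i := i) h2 (by
    rw [G.form_symm, ← G.form_preserved (cs.simple i), simple_simple, simple_root, map_neg,
      LinearMap.neg_apply]
    linarith)
  have e2 := congrArg (G.ρ (cs.simple i)) e
  rw [simple_simple, simple_root] at e2
  exact G.root_ne_zero h1.1.1 (G.eq_zero_of_nn h1.1.2 (by rw [e2, neg_neg]; exact G.nn_root i))

theorem reach_finite [Finite B] (K : Set ℝ) (hK : K.Finite)
    (hKv : ∀ β ∈ G.Roots, ∀ i, -1 < G.form (G.root i) β → G.form (G.root i) β < 1 →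
      G.form (G.root i) β ∈ K) (n : ℕ) :
    ∀ J : Set B, J.ncard = n → ∀ β0, G.IsSmall β0 →
      {β | Relation.ReflTransGen (G.Step J) β0 β}.Finite := by
  induction n using Nat.strong_induction_on with
  | _ n IH =>
    intro J hJ β0 h0
    set Good : Set V := {β | Relation.ReflTransGen (G.Step J) β0 β ∧
      ∀ i ∈ J, -1 < G.form (G.root i) β} with hGood
    have hgf : Good.Finite := by
      let F : V → (B → ℝ) := fun β i => if i ∈ J then G.form (G.root i) β else 1
      have hfin : (Set.pi Set.univ (fun _ : B => insert 1 K)).Finite :=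
        Set.Finite.pi' (fun _ => hK.insert 1) |>.subset (fun f hf i => hf i (Set.mem_univ i))
      refine Set.Finite.of_finite_image (f := F) (hfin.subset ?_) ?_
      · rintro _ ⟨β, hβ, rfl⟩ i _
        change (if i ∈ J then G.form (G.root i) β else 1) ∈ _
        have hsm := G.step_small h0 hβ.1
        split_ifs with hi
        · by_cases h1 : G.form (G.root i) β < 1
          · exact Or.inr (hKv β hsm.1.1 i (hβ.2 i hi) h1)
          · left
            rw [G.small_eq_simple (i := i) hsm (by rw [G.form_symm]; linarith), form_self]
        · exact Or.inl rfl
      · intro β hβ β' hβ' he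
        have hs := G.step_small h0 hβ.1
        have hs' := G.step_small h0 hβ'.1
        have hmem : β - β' ∈ Submodule.span ℝ (G.root '' J) := by
          have := Submodule.sub_mem _ (G.step_span hβ.1) (G.step_span hβ'.1)
          simpa using this
        have hz : ∀ u ∈ Submodule.span ℝ (G.root '' J), G.form u (β - β') = 0 := by
          intro u hu
          induction hu using Submodule.span_induction with
          | mem u hu =>
            obtain ⟨i, hi, rfl⟩ := hu
            have := congrFun he i
            simp only [F, if_pos hi] at this
            rw [map_sub, this, sub_self]
          | zero => simp
          | add a b _ _ ha hb => rw [map_add, LinearMap.add_apply, ha, hb, add_zero]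
          | smul a b _ hb => rw [map_smul, LinearMap.smul_apply, hb, smul_zero]
        have hq := hz _ hmem
        simp only [map_sub, LinearMap.sub_apply, G.norm_root hs.1.1, G.norm_root hs'.1.1,
          G.form_symm β' β] at hq
        exact G.small_eq_of_form hs hs' (by linarith)
    set T : Set V := {β | (β = β0 ∨ ∃ i, ∃ γ ∈ Good, β = G.ρ (cs.simple i) γ) ∧ G.IsSmall β}
      with hT
    have hTf : T.Finite := by
      have : (insert β0 (⋃ i : B, (G.ρ (cs.simple i)) '' Good)).Finite :=
        (Set.finite_iUnion fun i => hgf.image _).insert _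
      refine this.subset ?_
      rintro β ⟨rfl | ⟨i, γ, hγ, rfl⟩, _⟩
      · exact Set.mem_insert _ _
      · exact Or.inr (Set.mem_iUnion.2 ⟨i, γ, hγ, rfl⟩)
    have hbig : (Good ∪ ⋃ β ∈ T, ⋃ s ∈ J,
        {β' | Relation.ReflTransGen (G.Step (J \ {s})) β β'}).Finite := by
      refine hgf.union (hTf.biUnion fun β hβ => (Set.toFinite J).biUnion fun s hs => ?_)
      refine IH _ ?_ (J \ {s}) rfl β hβ.2
      rw [← hJ]
      exact Set.ncard_sdiff_singleton_lt_of_mem hs (Set.toFinite J)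
    have claim : ∀ β, Relation.ReflTransGen (G.Step J) β0 β → β ∈ Good ∨
        ∃ γ ∈ T, ∃ s ∈ J, Relation.ReflTransGen (G.Step (J \ {s})) γ β ∧
          G.form (G.root s) β ≤ -1 := by
      intro β h
      have aux : ∀ β, Relation.ReflTransGen (G.Step J) β0 β → β ∈ T → β ∈ Good ∨
          ∃ γ ∈ T, ∃ s ∈ J, Relation.ReflTransGen (G.Step (J \ {s})) γ β ∧
            G.form (G.root s) β ≤ -1 := by
        intro β h hβT
        by_cases hg : ∀ i ∈ J, -1 < G.form (G.root i) β
        · exact Or.inl ⟨h, hg⟩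
        · right
          push Not at hg
          obtain ⟨s, hs, hsb⟩ := hg
          exact ⟨β, hβT, s, hs, Relation.ReflTransGen.refl, hsb⟩
      induction h with
      | refl => exact aux β0 Relation.ReflTransGen.refl ⟨Or.inl rfl, h0⟩
      | tail hr hs ih =>
        rcases ih with hg | ⟨γ, hγ, s, hsJ, hrr, hle⟩
        · refine aux _ (hr.tail hs) ?_
          obtain ⟨_, h2, i, _, _, he⟩ := hs
          exact ⟨Or.inr ⟨i, _, hg, he⟩, h2⟩
        · have hst := G.step_avoid hs hle
          exact Or.inr ⟨γ, hγ, s, hsJ, hrr.tail hst, G.step_form_le hst hle⟩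
    refine hbig.subset ?_
    intro β hβ
    rcases claim β hβ with h | ⟨γ, hγ, s, hs, hr, _⟩
    · exact Or.inl h
    · exact Or.inr (Set.mem_biUnion hγ (Set.mem_biUnion hs hr))

end GeomRep


namespace GeomRep

variable {B : Type*} {W : Type*} [Group W] {M : CoxeterMatrix B}
  {cs : CoxeterSystem M W} {V : Type*} [AddCommGroup V] [Module ℝ V]
  (G : GeomRep M cs V)

/-! ### Finiteness of the set of inner products in the open interval from -1 to 1 -/

theorem quad_lower {c : ℝ} (a b : ℝ) :
    (1 - |c|) * (a ^ 2 + b ^ 2) ≤ a ^ 2 + 2 * c * a * b + b ^ 2 := by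
  rcases abs_cases c with ⟨h, h'⟩ | ⟨h, h'⟩ <;> rw [h]
  · nlinarith [mul_nonneg h' (sq_nonneg (a + b))]
  · nlinarith [mul_nonneg (neg_nonneg.2 h'.le) (sq_nonneg (a - b))]

theorem quad_upper {c : ℝ} (hc : |c| ≤ 1) (a b : ℝ) :
    a ^ 2 + 2 * c * a * b + b ^ 2 ≤ 2 * (a ^ 2 + b ^ 2) := by
  obtain ⟨h1, h2⟩ := abs_le.1 hc
  nlinarith [mul_nonneg (by linarith : 0 ≤ 1 + c) (sq_nonneg (a - b)),
    mul_nonneg (by linarith : 0 ≤ 1 - c) (sq_nonneg (a + b))]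

theorem form_comb {α β : V} (hα : α ∈ G.Roots) (hβ : β ∈ G.Roots) (a b : ℝ) :
    G.form (a • α + b • β) (a • α + b • β) = a ^ 2 + 2 * G.form α β * a * b + b ^ 2 := by
  simp only [map_add, map_smul, LinearMap.add_apply, LinearMap.smul_apply, smul_eq_mul,
    G.norm_root hα, G.norm_root hβ, G.form_symm β α]
  ring

theorem recurrence (P : ℕ → ℝ × ℝ × ℝ × ℝ) (L : ℝ)
    (hP : ∀ n, |(P n).1| ≤ L ∧ |(P n).2.1| ≤ L ∧ |(P n).2.2.1| ≤ L ∧ |(P n).2.2.2| ≤ L)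
    {ε : ℝ} (hε : 0 < ε) : ∃ m n, m < n ∧ dist (P n) (P m) < ε := by
  have hb : Bornology.IsBounded (Metric.closedBall (0 : ℝ × ℝ × ℝ × ℝ) L) :=
    Metric.isBounded_closedBall
  obtain ⟨a, -, φ, hφ, ht⟩ := tendsto_subseq_of_bounded hb (x := P) (fun n => by
    rw [mem_closedBall_zero_iff]
    obtain ⟨h1, h2, h3, h4⟩ := hP n
    simp only [Prod.norm_def, Real.norm_eq_abs, sup_le_iff]
    exact ⟨h1, h2, h3, h4⟩)
  obtain ⟨N, hN⟩ := Metric.cauchySeq_iff'.1 ht.cauchySeq ε hε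
  exact ⟨φ N, φ (N + 1), hφ (Nat.lt_succ_self N), hN (N + 1) (Nat.le_succ N)⟩

theorem comb_pow {α β : V} {r : W}
    (hr : ∀ x, ∃ a b : ℝ, G.ρ r x = x + a • α + b • β) (k : ℕ) :
    ∀ x, ∃ a b : ℝ, G.ρ (r ^ k) x = x + a • α + b • β := by
  induction k with
  | zero => intro x; exact ⟨0, 0, by rw [pow_zero, rho_one]; simp⟩
  | succ k ih =>
    intro x
    obtain ⟨a, b, h⟩ := ih x
    obtain ⟨a', b', h'⟩ := hr (G.ρ (r ^ k) x)
    refine ⟨a + a', b + b', ?_⟩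
    rw [pow_succ', rho_mul, h', h]; module

theorem near_one {α β : V} (hα : α ∈ G.Roots) (hβ : β ∈ G.Roots) (hc : |G.form α β| < 1)
    {r : W} (hr : ∀ x, ∃ a b : ℝ, G.ρ r x = x + a • α + b • β) {η : ℝ} (hη : 0 < η) :
    ∃ k : ℕ, 1 ≤ k ∧ (∃ p q : ℝ, |p| ≤ η ∧ |q| ≤ η ∧ G.ρ (r ^ k) α = α + p • α + q • β) ∧
      (∃ p q : ℝ, |p| ≤ η ∧ |q| ≤ η ∧ G.ρ (r ^ k) β = β + p • α + q • β) := by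
  choose f g hfg using fun k => G.comb_pow hr k
  set c := G.form α β with hcdef
  have hc1 : 0 < 1 - |c| := by linarith
  -- coordinates of the images of the two roots
  have hA : ∀ k, G.ρ (r ^ k) α = (1 + f k α) • α + g k α • β := fun k => by rw [hfg]; module
  have hB : ∀ k, G.ρ (r ^ k) β = f k β • α + (1 + g k β) • β := fun k => by rw [hfg]; module
  have bound : ∀ a b : ℝ, a ^ 2 + 2 * c * a * b + b ^ 2 = 1 →
      |a| ≤ 1 / (1 - |c|) + 1 ∧ |b| ≤ 1 / (1 - |c|) + 1 := by
    intro a b h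
    have h1 := quad_lower (c := c) a b
    rw [h] at h1
    have h2 : a ^ 2 + b ^ 2 ≤ 1 / (1 - |c|) := by rw [le_div_iff₀ hc1]; linarith
    constructor
    · nlinarith [sq_abs a, sq_nonneg (|a| - 1), sq_nonneg b, abs_nonneg a]
    · nlinarith [sq_abs b, sq_nonneg (|b| - 1), sq_nonneg a, abs_nonneg b]
  have b1 : ∀ k, _ := fun k => bound (1 + f k α) (g k α) (by
    rw [hcdef, ← G.form_comb hα hβ, ← hA, G.form_preserved, G.norm_root hα])
  have b2 : ∀ k, _ := fun k => bound (f k β) (1 + g k β) (by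
    rw [hcdef, ← G.form_comb hα hβ, ← hB, G.form_preserved, G.norm_root hβ])
  obtain ⟨m, n, hmn, hd⟩ := recurrence (fun k => (1 + f k α, g k α, f k β, 1 + g k β)) _
    (fun k => ⟨(b1 k).1, (b1 k).2, (b2 k).1, (b2 k).2⟩)
    (ε := η * (1 - |c|) / 2) (by positivity)
  simp only [Prod.dist_eq, Real.dist_eq, sup_lt_iff] at hd
  obtain ⟨d1, d2, d3, d4⟩ := hd
  obtain ⟨k, rfl⟩ : ∃ k, n = m + k := ⟨n - m, by omega⟩
  have small : ∀ (a b p q : ℝ), |a| < η * (1 - |c|) / 2 → |b| < η * (1 - |c|) / 2 →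
      p ^ 2 + 2 * c * p * q + q ^ 2 = a ^ 2 + 2 * c * a * b + b ^ 2 → |p| ≤ η ∧ |q| ≤ η := by
    intro a b p q ha hb h
    have h1 := quad_lower (c := c) p q
    have h2 := quad_upper hc.le a b
    have h3 : a ^ 2 ≤ (η * (1 - |c|) / 2) ^ 2 := sq_le_sq' (by linarith [(abs_lt.1 ha).1])
      (abs_lt.1 ha).2.le
    have h4 : b ^ 2 ≤ (η * (1 - |c|) / 2) ^ 2 := sq_le_sq' (by linarith [(abs_lt.1 hb).1])
      (abs_lt.1 hb).2.le
    have h5 : (1 - |c|) * (p ^ 2 + q ^ 2) ≤ (1 - |c|) * ((1 - |c|) * η ^ 2) := by nlinarith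
    have h6 := le_of_mul_le_mul_left h5 hc1
    have h7 : p ^ 2 + q ^ 2 ≤ η ^ 2 := by nlinarith [abs_nonneg c, sq_nonneg η]
    exact ⟨abs_le_of_sq_le_sq (by nlinarith) hη.le, abs_le_of_sq_le_sq (by nlinarith) hη.le⟩
  have key : ∀ (x : V) (a b : ℝ), |a| < η * (1 - |c|) / 2 → |b| < η * (1 - |c|) / 2 →
      G.ρ (r ^ (m + k)) x - G.ρ (r ^ m) x = a • α + b • β →
      |f k x| ≤ η ∧ |g k x| ≤ η := by
    intro x a b ha hb h
    refine small a b _ _ ha hb ?_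
    rw [hcdef, ← G.form_comb hα hβ, ← G.form_comb hα hβ, ← h]
    have e : G.ρ (r ^ (m + k)) x - G.ρ (r ^ m) x = G.ρ (r ^ m) (f k x • α + g k x • β) := by
      rw [pow_add, rho_mul, hfg k x, ← map_sub]; congr 1; module
    rw [e, G.form_preserved]
  obtain ⟨p1, q1⟩ := key α _ _ d1 d2 (by rw [hA, hA]; module)
  obtain ⟨p2, q2⟩ := key β _ _ d3 d4 (by rw [hB, hB]; module)
  exact ⟨k, by omega, ⟨_, _, p1, q1, hfg k α⟩, ⟨_, _, p2, q2, hfg k β⟩⟩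

theorem exists_period [Finite B] {α β : V} (hα : α ∈ G.Roots) (hβ : β ∈ G.Roots)
    (hc : |G.form α β| < 1)
    {r : W} (hr : ∀ x, ∃ a b : ℝ, G.ρ r x = x + a • α + b • β) :
    ∃ k : ℕ, 1 ≤ k ∧ r ^ k = 1 := by
  set c := G.form α β with hcdef
  obtain ⟨A, hA⟩ : ∃ A : ℝ, ∀ i, |G.form (G.root i) α| + |G.form (G.root i) β| ≤ A := by
    obtain ⟨A, hA⟩ := (Set.finite_range
      (fun i => |G.form (G.root i) α| + |G.form (G.root i) β|)).bddAbove
    exact ⟨A, fun i => hA ⟨i, rfl⟩⟩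
  set H := |G.ht α| + |G.ht β| with hH
  have hH0 : 0 ≤ H := by positivity
  have hD : 0 < 1 - c ^ 2 := by
    have := (sq_lt_one_iff_abs_lt_one c).2 hc; linarith
  have hD1 : 1 - c ^ 2 ≤ 1 := by nlinarith
  set η := (1 - c ^ 2) / (2 * |A| * H + 1) with hη
  have hden : 0 < 2 * |A| * H + 1 := by positivity
  have hη0 : 0 < η := by positivity
  obtain ⟨k, hk, ⟨p, q, hp, hq, e1⟩, ⟨p', q', hp', hq', e2⟩⟩ :=
    G.near_one hα hβ hc hr hη0
  refine ⟨k, hk, ?_⟩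
  suffices h : (r ^ k)⁻¹ = 1 by simpa using h
  apply G.eq_one_of_pos
  intro i
  apply G.pos_of_ht (G.rho_mem _ (G.root_mem i))
  set y := G.ρ (r ^ k)⁻¹ (G.root i) with hy
  have hy' : G.ρ (r ^ k) y = G.root i := by rw [hy, ← rho_mul, mul_inv_cancel, rho_one]
  obtain ⟨a, b, hab⟩ := G.comb_pow hr k y
  rw [hy'] at hab
  have hyab : y = G.root i - a • α - b • β := by rw [hab]; module
  have X1 : G.form (G.root i) (G.ρ (r ^ k) α) = G.form y α := by
    rw [← hy', G.form_preserved]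
  have X2 : G.form (G.root i) (G.ρ (r ^ k) β) = G.form y β := by
    rw [← hy', G.form_preserved]
  rw [e1, hyab] at X1
  rw [e2, hyab] at X2
  simp only [map_add, map_sub, map_smul, LinearMap.sub_apply, LinearMap.smul_apply, smul_eq_mul,
    G.norm_root hα, G.norm_root hβ, G.form_symm β α, ← hcdef] at X1 X2
  set x1 := G.form (G.root i) α
  set x2 := G.form (G.root i) β
  have hAi : |x1| + |x2| ≤ |A| := (hA i).trans (le_abs_self A)
  have est : ∀ p q : ℝ, |p| ≤ η → |q| ≤ η → |p * x1 + q * x2| ≤ η * |A| := by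
    intro p q hp hq
    calc |p * x1 + q * x2| ≤ |p * x1| + |q * x2| := abs_add_le _ _
      _ = |p| * |x1| + |q| * |x2| := by rw [abs_mul, abs_mul]
      _ ≤ η * |x1| + η * |x2| := by gcongr
      _ ≤ η * |A| := by rw [← mul_add]; gcongr
  have E1 := est p q hp hq
  have E2 := est p' q' hp' hq'
  have ea : (1 - c ^ 2) * a = -(p * x1 + q * x2) + c * (p' * x1 + q' * x2) := by linear_combination X1 - c * X2
  have eb : (1 - c ^ 2) * b = -(p' * x1 + q' * x2) + c * (p * x1 + q * x2) := by linear_combination X2 - c * X1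
  have gen : ∀ X Y : ℝ, |X| ≤ η * |A| → |Y| ≤ η * |A| → |-X + c * Y| ≤ 2 * (η * |A|) := by
    intro X Y hX hY
    calc |-X + c * Y| ≤ |-X| + |c * Y| := abs_add_le _ _
      _ = |X| + |c| * |Y| := by rw [abs_neg, abs_mul]
      _ ≤ η * |A| + 1 * (η * |A|) := by gcongr
      _ = _ := by ring
  have Ea := gen _ _ E1 E2
  have Eb := gen _ _ E2 E1
  rw [← ea, abs_mul, abs_of_pos hD] at Ea
  rw [← eb, abs_mul, abs_of_pos hD] at Eb
  have hht : G.ht y = 1 - (a * G.ht α + b * G.ht β) := by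
    rw [hyab, map_sub, map_sub, map_smul, map_smul, ht_root, smul_eq_mul, smul_eq_mul]; ring
  rw [hht]
  have hfin : |a * G.ht α + b * G.ht β| ≤ |a| * |G.ht α| + |b| * |G.ht β| := by
    rw [← abs_mul, ← abs_mul]; exact abs_add_le _ _
  have hlt : (1 - c ^ 2) * (|a| * |G.ht α| + |b| * |G.ht β|) < (1 - c ^ 2) * 1 := by
    calc (1 - c ^ 2) * (|a| * |G.ht α| + |b| * |G.ht β|)
        = ((1 - c ^ 2) * |a|) * |G.ht α| + ((1 - c ^ 2) * |b|) * |G.ht β| := by ring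
      _ ≤ 2 * (η * |A|) * |G.ht α| + 2 * (η * |A|) * |G.ht β| := by gcongr
      _ = η * (2 * |A| * H) := by rw [hH]; ring
      _ < η * (2 * |A| * H + 1) := by apply mul_lt_mul_of_pos_left _ hη0; linarith
      _ = (1 - c ^ 2) * 1 := by rw [hη, div_mul_cancel₀ _ hden.ne', mul_one]
  have := lt_of_mul_lt_mul_left hlt hD.le
  have := (abs_le.1 hfin).2
  linarith

theorem exists_zero_functional [Finite B] {α β : V} (hα : α ∈ G.Roots) (hβ : β ∈ G.Roots)
    (hc : |G.form α β| < 1) :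
    ∃ f : V →ₗ[ℝ] ℝ, f α = 0 ∧ f β = 0 ∧ {v | v ∈ G.PosRoots ∧ f v ≤ 0}.Finite := by
  obtain ⟨t, ht⟩ := G.exists_refl hα
  obtain ⟨t', ht'⟩ := G.exists_refl hβ
  set c := G.form α β with hcdef
  have hr : ∀ x, G.ρ (t * t') x = x + (4 * c * G.form β x - 2 * G.form α x) • α
      + (-2 * G.form β x) • β := by
    intro x
    rw [rho_mul, ht, ht']
    simp only [map_sub, map_smul, smul_eq_mul, ← hcdef]
    module
  obtain ⟨k, hk, hk1⟩ := G.exists_period hα hβ hc (r := t * t') (fun x => ⟨_, _, hr x⟩)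
  set r := t * t' with hrdef
  let f : V →ₗ[ℝ] ℝ := ∑ j ∈ Finset.range k, G.ht ∘ₗ (G.ρ (r ^ j)).toLinearMap
  have hf : ∀ x, f x = ∑ j ∈ Finset.range k, G.ht (G.ρ (r ^ j) x) := by
    intro x; simp [f, LinearMap.sum_apply]
  have hinv : ∀ x, f (G.ρ r x) = f x := by
    intro x
    rw [hf, hf]
    have h1 := Finset.sum_range_succ (fun j => G.ht (G.ρ (r ^ j) x)) k
    have h2 := Finset.sum_range_succ' (fun j => G.ht (G.ρ (r ^ j) x)) k
    simp only [hk1, pow_zero] at h1 h2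
    rw [h1] at h2
    simp only [← rho_mul, ← pow_succ]
    linarith
  have i1 := hinv α
  have i2 := hinv β
  rw [hr] at i1 i2
  simp only [map_add, map_smul, smul_eq_mul, G.norm_root hα, G.norm_root hβ, G.form_symm β α,
    ← hcdef] at i1 i2
  have hD : 0 < 1 - c ^ 2 := by
    have := (sq_lt_one_iff_abs_lt_one c).2 hc; linarith
  have hb : f β = c * f α := by linarith
  have ha : (1 - c ^ 2) * f α = 0 := by rw [hb] at i1; linarith
  have ha0 : f α = 0 := (mul_eq_zero.1 ha).resolve_left hD.ne'
  refine ⟨f, ha0, by rw [hb, ha0, mul_zero], ?_⟩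
  have hfin : (⋃ j ∈ Finset.range k,
      {v | v ∈ G.PosRoots ∧ G.ρ (r ^ j) v ∈ G.NegRoots}).Finite :=
    (Finset.range k).finite_toSet.biUnion fun j _ => G.inv_finite (r ^ j)
  refine hfin.subset ?_
  rintro v ⟨hv, hv0⟩
  by_contra hcon
  simp only [Set.mem_iUnion, not_exists] at hcon
  have : 0 < f v := by
    rw [hf]
    apply Finset.sum_pos
    · intro j hj
      have h1 := hcon j hj
      apply G.ht_pos
      refine ⟨G.rho_mem _ hv.1, ?_⟩
      by_contra h2
      exact h1 ⟨hv, (G.mem_neg_iff (G.rho_mem _ hv.1)).2 h2⟩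
    · exact ⟨0, Finset.mem_range.2 (by omega)⟩
  linarith

theorem straighten (n : ℕ) : ∀ f : V →ₗ[ℝ] ℝ, {v | v ∈ G.PosRoots ∧ f v ≤ 0}.Finite →
    {v | v ∈ G.PosRoots ∧ f v < 0}.ncard = n →
    ∃ w : W, (∀ i, 0 ≤ f (G.ρ w (G.root i))) ∧
      {v | v ∈ G.PosRoots ∧ f (G.ρ w v) ≤ 0}.Finite := by
  induction n using Nat.strong_induction_on with
  | _ n IH =>
    intro f hf hn
    by_cases h : ∀ i, 0 ≤ f (G.root i)
    · exact ⟨1, fun i => by rw [rho_one]; exact h i, by simpa only [rho_one] using hf⟩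
    push Not at h
    obtain ⟨s, hs⟩ := h
    set S : Set V := {v | v ∈ G.PosRoots ∧ f v < 0} with hS
    have hSf : S.Finite := hf.subset fun v hv => ⟨hv.1, hv.2.le⟩
    let f' : V →ₗ[ℝ] ℝ := f ∘ₗ (G.ρ (cs.simple s)).toLinearMap
    have hf' : ∀ x, f' x = f (G.ρ (cs.simple s) x) := fun x => rfl
    have h1 : {v | v ∈ G.PosRoots ∧ f' v ≤ 0}.Finite := by
      refine ((hf.image (G.ρ (cs.simple s))).insert (G.root s)).subset ?_
      rintro v ⟨hv, hv'⟩
      by_cases hne : v = G.root s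
      · exact Or.inl hne
      · exact Or.inr ⟨G.ρ (cs.simple s) v, ⟨G.simple_pos hv hne, hv'⟩, G.simple_simple s v⟩
    have h2 : {v | v ∈ G.PosRoots ∧ f' v < 0}.ncard < n := by
      have hsub : {v | v ∈ G.PosRoots ∧ f' v < 0} ⊆
          (G.ρ (cs.simple s)) '' (S \ {G.root s}) := by
        rintro v ⟨hv, hv'⟩
        rw [hf'] at hv'
        have hne : v ≠ G.root s := by
          rintro rfl
          rw [simple_root, map_neg] at hv'
          linarith
        refine ⟨G.ρ (cs.simple s) v, ⟨⟨G.simple_pos hv hne, hv'⟩, ?_⟩, G.simple_simple s v⟩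
        intro he
        have he : G.ρ (cs.simple s) v = G.root s := he
        have e2 := congrArg (G.ρ (cs.simple s)) he
        rw [simple_simple, simple_root] at e2
        exact G.root_ne_zero hv.1 (G.eq_zero_of_nn hv.2 (by rw [e2, neg_neg]; exact G.nn_root s))
      have a1 := Set.ncard_le_ncard hsub ((hSf.subset Set.sdiff_subset).image _)
      have a2 := Set.ncard_image_le (f := G.ρ (cs.simple s)) (hSf.subset (Set.sdiff_subset (t := {G.root s})))
      have a3 := Set.ncard_sdiff_singleton_lt_of_mem (s := S) (a := G.root s) ⟨G.posroot s, hs⟩ hSf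
      omega
    obtain ⟨w, hw1, hw2⟩ := IH _ h2 f' h1 rfl
    refine ⟨cs.simple s * w, fun i => ?_, ?_⟩
    · rw [rho_mul]; exact hw1 i
    · simp only [rho_mul]; exact hw2

/-- Roots in the span of the simple roots indexed by `J`. -/
def RootsIn (J : Set B) : Set V := {v | v ∈ G.Roots ∧ v ∈ Submodule.span ℝ (G.root '' J)}

/-- The set of inner products of roots lying in finite standard parabolic subsystems. -/
def Kset : Set ℝ := ⋃ J ∈ {J : Set B | (G.RootsIn J).Finite},
  Set.image2 (fun a b => G.form a b) (G.RootsIn J) (G.RootsIn J)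

theorem Kset_finite [Finite B] : G.Kset.Finite :=
  (Set.toFinite _).biUnion fun _ hJ => Set.Finite.image2 _ hJ hJ

theorem mem_Kset [Finite B] {α β : V} (hα : α ∈ G.Roots) (hβ : β ∈ G.Roots)
    (hc : |G.form α β| < 1) : G.form α β ∈ G.Kset := by
  obtain ⟨f, fa, fb, hf⟩ := G.exists_zero_functional hα hβ hc
  obtain ⟨w, hw, hwf⟩ := G.straighten _ f hf rfl
  let g : V →ₗ[ℝ] ℝ := f ∘ₗ (G.ρ w).toLinearMap
  have hg : ∀ x, g x = f (G.ρ w x) := fun x => rfl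
  set J : Set B := {i | g (G.root i) = 0} with hJ
  have cone0 : ∀ v, G.IsNonnegComb v → g v = 0 → v ∈ Submodule.span ℝ (G.root '' J) := by
    rintro v ⟨c, hc, rfl⟩ h0
    rw [Finsupp.sum, map_sum] at h0
    simp only [map_smul, smul_eq_mul] at h0
    have := (Finset.sum_eq_zero_iff_of_nonneg
      (fun i _ => mul_nonneg (hc i) (hw i))).1 h0
    refine Submodule.sum_mem _ fun i hi => ?_
    refine Submodule.smul_mem _ _ (Submodule.subset_span ⟨i, ?_, rfl⟩)
    exact (mul_eq_zero.1 (this i hi)).resolve_left (by simpa using hi)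
  have root0 : ∀ v ∈ G.Roots, g v = 0 → v ∈ G.RootsIn J := by
    intro v hv h0
    refine ⟨hv, ?_⟩
    rcases G.pos_or_neg hv with h | h
    · exact cone0 v h h0
    · have := cone0 (-v) h (by rw [map_neg, h0, neg_zero])
      simpa using this
  have span0 : ∀ v ∈ Submodule.span ℝ (G.root '' J), g v = 0 := by
    intro v hv
    have : Submodule.span ℝ (G.root '' J) ≤ LinearMap.ker g := by
      rw [Submodule.span_le]
      rintro _ ⟨i, hi, rfl⟩
      exact hi
    exact this hv
  have hfin : (G.RootsIn J).Finite := by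
    refine (hwf.union (hwf.image (fun v => -v))).subset ?_
    rintro v ⟨hv, hvs⟩
    have h0 := span0 v hvs
    rcases G.pos_or_neg hv with h | h
    · exact Or.inl ⟨⟨hv, h⟩, h0.le⟩
    · refine Or.inr ⟨-v, ⟨⟨G.neg_mem hv, h⟩, ?_⟩, neg_neg v⟩
      change g (-v) ≤ 0
      rw [map_neg, h0, neg_zero]
  have e : ∀ y, G.ρ w (G.ρ w⁻¹ y) = y := fun y => by rw [← rho_mul, mul_inv_cancel, rho_one]
  refine Set.mem_biUnion (x := J) hfin ⟨G.ρ w⁻¹ α, ?_, G.ρ w⁻¹ β, ?_, ?_⟩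
  · exact root0 _ (G.rho_mem _ hα) (by rw [hg, e, fa])
  · exact root0 _ (G.rho_mem _ hβ) (by rw [hg, e, fb])
  · exact G.form_preserved _ _ _

end GeomRep


/-- The set of small roots of a finite-rank Coxeter system is finite. -/
theorem smallRoots_finite {B : Type*} {W : Type*} [Group W] {M : CoxeterMatrix B}
    (cs : CoxeterSystem M W) {V : Type*} [AddCommGroup V] [Module ℝ V]
    (G : GeomRep M cs V) [Finite B] :
    {β : V | G.IsSmall β}.Finite := by
  have key := G.reach_finite G.Kset G.Kset_finite
    (fun β hβ i h1 h2 => G.mem_Kset (G.root_mem i) hβ (abs_lt.2 ⟨h1, h2⟩)) _ Set.univ rfl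
  have hfin : (⋃ i ∈ {i : B | G.IsSmall (G.root i)},
      {β | Relation.ReflTransGen (G.Step Set.univ) (G.root i) β}).Finite :=
    (Set.toFinite _).biUnion fun i hi => key _ hi
  refine hfin.subset ?_
  intro β hβ
  obtain ⟨i, hi, hr⟩ := G.reach' hβ
  exact Set.mem_biUnion hi hr
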